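/- For generic α, β ∈ ℂ, the quantities V_α, W_β, S_{β,α} satisfy W_β·Ṽ_α = 1 − χ_{β,−δ}(ξ+δ)·S̃_{β,α} − χ_{α,δ}(ξ)·S_{β,α}, where tilde denotes evaluation at (n+1,m,h); the analogous relations hold with (tilde, δ) replaced by (hat, ε) and by (bar, λ). -/

import Mathlib

open scoped BigOperators

noncomputable section

/-- A period lattice in `ℂ` spanned by two `ℝ`-independent periods. -/
structure EllLattice where
  ω₁ : ℂ
  ω₂ : ℂ
  indep : ∀ a b : ℝ, a • ω₁ + b • ω₂ = 0 → a = 0 ∧ b = 0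

namespace EllLattice

/-- Membership in the lattice `Λ = ℤω₁ + ℤω₂`. -/
def mem (L : EllLattice) (z : ℂ) : Prop := ∃ m n : ℤ, z = m • L.ω₁ + n • L.ω₂

/-- The lattice point with integer coordinates `p = (m, n)`. -/
def per (L : EllLattice) (p : ℤ × ℤ) : ℂ := p.1 • L.ω₁ + p.2 • L.ω₂

/-- The Weierstrass sigma function associated to the lattice, defined by its
Hadamard product over the nonzero lattice points. -/
def sigma (L : EllLattice) (z : ℂ) : ℂ :=
  z * ∏' p : {p : ℤ × ℤ // p ≠ 0},
      ((1 - z / L.per p.1) *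
        Complex.exp (z / L.per p.1 + z ^ 2 / (2 * (L.per p.1) ^ 2)))

/-- The Weierstrass zeta function `ζ = σ′/σ`. -/
def zeta (L : EllLattice) (z : ℂ) : ℂ := deriv L.sigma z / L.sigma z

/-- The Weierstrass `℘`-function `℘ = −ζ′`. -/
def wp (L : EllLattice) (z : ℂ) : ℂ := - deriv L.zeta z

/-- `Φ_ξ(κ) = σ(ξ+κ)/(σ(ξ)σ(κ))`. -/
def Phi (L : EllLattice) (ξ κ : ℂ) : ℂ := L.sigma (ξ + κ) / (L.sigma ξ * L.sigma κ)

/-- The Lamé function `Ψ_ξ(κ) = Φ_ξ(κ)·e^{−ζ(ξ)κ}`. -/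
def Psi (L : EllLattice) (ξ κ : ℂ) : ℂ := L.Phi ξ κ * Complex.exp (-(L.zeta ξ) * κ)

/-- `η_δ(ξ) = ζ(ξ+δ) − ζ(ξ) − ζ(δ)`. -/
def eta (L : EllLattice) (δ ξ : ℂ) : ℂ := L.zeta (ξ + δ) - L.zeta ξ - L.zeta δ

/-- `χ_{α,β}(ξ) = ζ(α) + ζ(β) + ζ(ξ) − ζ(ξ+α+β)`. -/
def chi (L : EllLattice) (α β ξ : ℂ) : ℂ :=
  L.zeta α + L.zeta β + L.zeta ξ - L.zeta (ξ + α + β)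

end EllLattice

open Matrix

/-- All the data entering the elliptic (N,N′)-soliton solutions of the lattice KP system:
a period lattice, lattice parameters `δ, ε, λ`, a base point `ξ₀`, rapidity parameters
`κ_i, κ′_j`, initial plane-wave constants `ρ⁰_i, ν⁰_j` and a constant `N′×N` matrix `C`. -/
structure KPData (N N' : ℕ) where
  L : EllLattice
  del : ℂ
  eps : ℂ
  lam : ℂ
  xi0 : ℂ
  κ : Fin N → ℂ
  κ' : Fin N' → ℂ
  ρ0 : Fin N → ℂ
  ν0 : Fin N' → ℂ
  C : Matrix (Fin N') (Fin N) ℂ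

namespace KPData

variable {N N' : ℕ}

/-- `ξ = ξ₀ + nδ + mε + hλ`. -/
def xi (D : KPData N N') (n m h : ℤ) : ℂ :=
  D.xi0 + n • D.del + m • D.eps + h • D.lam

/-- The plane-wave factor `ρ_i(n,m,h)`. -/
def ρ (D : KPData N N') (i : Fin N) (n m h : ℤ) : ℂ :=
  (Complex.exp (-(D.L.zeta D.del) * D.κ i) * D.L.Psi D.del (-(D.κ i))) ^ n *
  (Complex.exp (-(D.L.zeta D.eps) * D.κ i) * D.L.Psi D.eps (-(D.κ i))) ^ m *
  (Complex.exp (-(D.L.zeta D.lam) * D.κ i) * D.L.Psi D.lam (-(D.κ i))) ^ h *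
  Complex.exp (D.L.zeta (D.xi n m h) * D.κ i) * D.ρ0 i

/-- The plane-wave factor `ν_j(n,m,h)`. -/
def ν (D : KPData N N') (j : Fin N') (n m h : ℤ) : ℂ :=
  (Complex.exp (D.L.zeta D.del * D.κ' j) * D.L.Psi D.del (D.κ' j)) ^ (-n) *
  (Complex.exp (D.L.zeta D.eps * D.κ' j) * D.L.Psi D.eps (D.κ' j)) ^ (-m) *
  (Complex.exp (D.L.zeta D.lam * D.κ' j) * D.L.Psi D.lam (D.κ' j)) ^ (-h) *
  Complex.exp (D.L.zeta (D.xi n m h) * D.κ' j) * D.ν0 j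

/-- The dressed elliptic Cauchy matrix `M_{ij} = ρ_i Ψ_ξ(κ_i + κ′_j) ν_j`. -/
def M (D : KPData N N') (n m h : ℤ) : Matrix (Fin N) (Fin N') ℂ :=
  Matrix.of fun i j => D.ρ i n m h * D.L.Psi (D.xi n m h) (D.κ i + D.κ' j) * D.ν j n m h

/-- The column vector `r = (ρ_i Ψ_ξ(κ_i))_i`. -/
def r (D : KPData N N') (n m h : ℤ) : Fin N → ℂ :=
  fun i => D.ρ i n m h * D.L.Psi (D.xi n m h) (D.κ i)

/-- The column vector `s = (ν_j Ψ_ξ(κ′_j))_j`. -/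
def s (D : KPData N N') (n m h : ℤ) : Fin N' → ℂ :=
  fun j => D.ν j n m h * D.L.Psi (D.xi n m h) (D.κ' j)

/-- The τ-function `τ = det(1 + MC)`. -/
def τ (D : KPData N N') (n m h : ℤ) : ℂ := (1 + D.M n m h * D.C).det

/-- The diagonal matrix `χ_{α,K}(ξ) = diag(χ_{α,κ_i}(ξ))`. -/
def DK (D : KPData N N') (α : ℂ) (n m h : ℤ) : Matrix (Fin N) (Fin N) ℂ :=
  Matrix.diagonal fun i => D.L.chi α (D.κ i) (D.xi n m h)

/-- The diagonal matrix `χ_{β,K′}(ξ) = diag(χ_{β,κ′_j}(ξ))`. -/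
def DK' (D : KPData N N') (β : ℂ) (n m h : ℤ) : Matrix (Fin N') (Fin N') ℂ :=
  Matrix.diagonal fun j => D.L.chi β (D.κ' j) (D.xi n m h)

/-- `W_β = 1 − sᵀ (χ_{β,K′}(ξ))⁻¹ C (1+MC)⁻¹ r`. -/
def W (D : KPData N N') (β : ℂ) (n m h : ℤ) : ℂ :=
  1 - D.s n m h ⬝ᵥ ((D.DK' β n m h)⁻¹ *ᵥ (D.C *ᵥ ((1 + D.M n m h * D.C)⁻¹ *ᵥ D.r n m h)))

/-- `V_α = 1 − sᵀ (1+CM)⁻¹ C (χ_{α,K}(ξ))⁻¹ r`. -/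
def V (D : KPData N N') (α : ℂ) (n m h : ℤ) : ℂ :=
  1 - D.s n m h ⬝ᵥ ((1 + D.C * D.M n m h)⁻¹ *ᵥ (D.C *ᵥ ((D.DK α n m h)⁻¹ *ᵥ D.r n m h)))

/-- `w₀ = sᵀ C (1+MC)⁻¹ r`. -/
def w0 (D : KPData N N') (n m h : ℤ) : ℂ :=
  D.s n m h ⬝ᵥ (D.C *ᵥ ((1 + D.M n m h * D.C)⁻¹ *ᵥ D.r n m h))

/-- `w = ζ(ξ) − w₀ − nζ(δ) − mζ(ε) − hζ(λ)`. -/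
def w (D : KPData N N') (n m h : ℤ) : ℂ :=
  D.L.zeta (D.xi n m h) - D.w0 n m h - n • D.L.zeta D.del - m • D.L.zeta D.eps -
    h • D.L.zeta D.lam

/-- `S_{β,α} = sᵀ (χ_{β,K′}(ξ))⁻¹ C (1+MC)⁻¹ (χ_{α,K}(ξ))⁻¹ r`. -/
def S (D : KPData N N') (β α : ℂ) (n m h : ℤ) : ℂ :=
  D.s n m h ⬝ᵥ ((D.DK' β n m h)⁻¹ *ᵥ
    (D.C *ᵥ ((1 + D.M n m h * D.C)⁻¹ *ᵥ ((D.DK α n m h)⁻¹ *ᵥ D.r n m h))))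

/-- `u_α = (1+MC)⁻¹ (χ_{α,K}(ξ))⁻¹ r`. -/
def u (D : KPData N N') (α : ℂ) (n m h : ℤ) : Fin N → ℂ :=
  (1 + D.M n m h * D.C)⁻¹ *ᵥ ((D.DK α n m h)⁻¹ *ᵥ D.r n m h)

/-- `u₀ = (1+MC)⁻¹ r`. -/
def u0 (D : KPData N N') (n m h : ℤ) : Fin N → ℂ :=
  (1 + D.M n m h * D.C)⁻¹ *ᵥ D.r n m h

/-- the adjoint (row) vector `ᵗu_β = sᵀ (χ_{β,K′}(ξ))⁻¹ (1+CM)⁻¹`. -/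
def tu (D : KPData N N') (β : ℂ) (n m h : ℤ) : Fin N' → ℂ :=
  (D.s n m h ᵥ* (D.DK' β n m h)⁻¹) ᵥ* (1 + D.C * D.M n m h)⁻¹

/-- the adjoint (row) vector `ᵗu₀ = sᵀ (1+CM)⁻¹`. -/
def tu0 (D : KPData N N') (n m h : ℤ) : Fin N' → ℂ :=
  D.s n m h ᵥ* (1 + D.C * D.M n m h)⁻¹

/-- The gauge variable `𝒱_α = Φ_ξ(α)·V_α`. -/
def calV (D : KPData N N') (α : ℂ) (n m h : ℤ) : ℂ :=
  D.L.Phi (D.xi n m h) α * D.V α n m h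

/-- The gauge variable `𝒲_β = Φ_ξ(β)·W_β`. -/
def calW (D : KPData N N') (β : ℂ) (n m h : ℤ) : ℂ :=
  D.L.Phi (D.xi n m h) β * D.W β n m h

/-- The Schwarzian variable `Z_{β,α} = Φ_ξ(α+β)·(1 − χ_{α,β}(ξ)·S_{β,α})`. -/
def Z (D : KPData N N') (β α : ℂ) (n m h : ℤ) : ℂ :=
  D.L.Phi (D.xi n m h) (α + β) * (1 - D.L.chi α β (D.xi n m h) * D.S β α n m h)

/-- Genericity of the parameters (together with finitely many auxiliary points `extra`):
no nontrivial integer combination of `ξ₀, δ, ε, λ`, the rapidity parameters and the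
auxiliary points lies on the lattice.  In particular all arguments of `σ` occurring in
the soliton solutions and their shifts lie outside `Λ`. -/
def Generic {P : ℕ} (D : KPData N N') (extra : Fin P → ℂ) : Prop :=
  ∀ (c0 cn cm ch : ℤ) (a : Fin N → ℤ) (b : Fin N' → ℤ) (e : Fin P → ℤ),
    ¬ (c0 = 0 ∧ cn = 0 ∧ cm = 0 ∧ ch = 0 ∧ a = 0 ∧ b = 0 ∧ e = 0) →
    ¬ D.L.mem (c0 • D.xi0 + cn • D.del + cm • D.eps + ch • D.lam +
      (∑ i, a i • D.κ i) + (∑ j, b j • D.κ' j) + ∑ t, e t • extra t)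

end KPData

section

open Filter Topology

namespace EllLattice

/-- The Mathlib period pair attached to the lattice. -/
def pp (L : EllLattice) : PeriodPair where
  ω₁ := L.ω₁
  ω₂ := L.ω₂
  indep := by
    rw [LinearIndependent.pair_iff]
    exact L.indep

lemma mem_iff (L : EllLattice) (z : ℂ) : L.mem z ↔ z ∈ L.pp.lattice := by
  rw [PeriodPair.mem_lattice]
  simp [mem, pp, eq_comm]

lemma per_eq (L : EllLattice) (p : ℤ × ℤ) : L.per p = (L.pp.latticeEquivProd.symm p : ℂ) := by
  rw [PeriodPair.latticeEquiv_symm_apply]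
  simp [per, pp]

/-- Elementary factor. -/
def E2 (u : ℂ) : ℂ := (1 - u) * Complex.exp (u + u ^ 2 / 2)

lemma E2_bound (u : ℂ) (hu : ‖u‖ ≤ 1 / 2) : ‖E2 u - 1‖ ≤ 2 * ‖u‖ ^ 3 := by
  have h1 : ‖-u‖ < 1 := by rw [norm_neg]; linarith
  have h2 := Complex.norm_log_sub_logTaylor_le 2 h1
  have h3 : Complex.logTaylor 3 (-u) = -u - u ^ 2 / 2 := by
    simp [Complex.logTaylor, Finset.sum_range_succ]; ring
  norm_num at h2
  rw [h3] at h2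
  have hne : (1 + -u : ℂ) ≠ 0 := by
    intro h
    have : u = 1 := by linear_combination -h
    rw [this] at hu; norm_num at hu
  have h4 : E2 u = Complex.exp (Complex.log (1 + -u) - (-u - u ^ 2 / 2)) := by
    rw [sub_eq_add_neg, Complex.exp_add, Complex.exp_log hne, E2]
    ring_nf
  have h5 : (1 - ‖u‖)⁻¹ ≤ 2 := by
    rw [inv_le_comm₀ (by linarith) (by norm_num)]; linarith
  have h6 : ‖Complex.log (1 + -u) - (-u - u ^ 2 / 2)‖ ≤ ‖u‖ ^ 3 := by
    refine h2.trans ?_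
    have : ‖u‖ ^ 3 * (1 - ‖u‖)⁻¹ ≤ ‖u‖ ^ 3 * 2 := by gcongr
    have h0 : 0 ≤ ‖u‖ ^ 3 := by positivity
    linarith
  rw [h4]
  refine (Complex.norm_exp_sub_one_le ?_).trans (by linarith)
  refine h6.trans ?_
  exact pow_le_one₀ (norm_nonneg _) (by linarith)

/-- Factor at the lattice point `l`. -/
def fac (L : EllLattice) (l : L.pp.lattice) (z : ℂ) : ℂ :=
  if (l : ℂ) = 0 then z else E2 (z / l)

lemma fac_bound (L : EllLattice) (r : ℝ) (hr : 0 < r) :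
    ∀ᶠ l : L.pp.lattice in cofinite, ∀ z ∈ Metric.closedBall (0 : ℂ) r,
      ‖L.fac l z - 1‖ ≤ 2 * r ^ 3 * ‖l‖⁻¹ ^ 3 := by
  have hfin : {l : L.pp.lattice | ‖l‖ ≤ 2 * r}.Finite := by
    have := isCompact_closedBall (0 : L.pp.lattice) (2 * r)
    have h2 := this.finite_of_discrete
    refine h2.subset ?_
    intro l hl
    simpa using hl
  filter_upwards [hfin.compl_mem_cofinite] with l hl z hz
  simp only [Set.mem_compl_iff, Set.mem_ofPred_eq, not_le] at hl
  have hl' : 2 * r < ‖(l : ℂ)‖ := hl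
  have hl0 : (l : ℂ) ≠ 0 := by
    rw [← norm_pos_iff]; linarith
  have hz' : ‖z‖ ≤ r := by simpa using hz
  have hp : 0 < ‖(l : ℂ)‖ := by linarith
  rw [fac, if_neg hl0]
  have hq : ‖z / l‖ ≤ r * ‖(l : ℂ)‖⁻¹ := by
    rw [norm_div, div_eq_mul_inv]; gcongr
  refine (E2_bound _ (hq.trans ?_)).trans ?_
  · rw [← div_eq_mul_inv, div_le_iff₀ hp]; linarith
  · calc 2 * ‖z / l‖ ^ 3 ≤ 2 * (r * ‖(l : ℂ)‖⁻¹) ^ 3 := by gcongr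
      _ = 2 * r ^ 3 * ‖l‖⁻¹ ^ 3 := by rw [mul_pow]; simp [mul_assoc]

lemma summable_inv3 (L : EllLattice) : Summable fun l : L.pp.lattice ↦ ‖l‖⁻¹ ^ 3 :=
  ZLattice.summable_norm_pow_inv _ 3 (by
    rw [ZLattice.rank ℝ]; simp)

lemma fac_differentiable (L : EllLattice) (l : L.pp.lattice) : Differentiable ℂ (L.fac l) := by
  unfold fac E2
  split_ifs <;> fun_prop

lemma fac_unif (L : EllLattice) :
    MultipliableLocallyUniformlyOn L.fac Set.univ := by
  refine multipliableLocallyUniformlyOn_of_of_forall_exists_nhds fun x _ ↦ ?_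
  refine ⟨Metric.closedBall 0 (‖x‖ + 1), ?_, ?_⟩
  · rw [nhdsWithin_univ]
    exact mem_of_superset (Metric.ball_mem_nhds x one_pos) fun y hy ↦ by
      have : ‖y - x‖ < 1 := by simpa [dist_eq_norm] using hy
      have h2 := norm_add_le (y - x) x
      simp only [sub_add_cancel] at h2
      simp; linarith
  · have := Summable.multipliableUniformlyOn_one_add (f := fun l z ↦ L.fac l z - 1)
      (isCompact_closedBall (0 : ℂ) (‖x‖ + 1))
      ((L.summable_inv3).mul_left (2 * (‖x‖ + 1) ^ 3)) (L.fac_bound _ (by positivity))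
      (fun l ↦ ((L.fac_differentiable l).continuous.sub continuous_const).continuousOn)
    simpa using this

lemma fac_summable (L : EllLattice) (z : ℂ) : Summable fun l ↦ ‖L.fac l z - 1‖ := by
  refine Summable.of_norm_bounded_eventually (g := fun l : L.pp.lattice ↦
      2 * (‖z‖ + 1) ^ 3 * ‖l‖⁻¹ ^ 3)
    ((L.summable_inv3).mul_left _) ?_
  filter_upwards [L.fac_bound (‖z‖ + 1) (by positivity)] with l hl
  simpa using hl z (by simp)

lemma fac_symm (L : EllLattice) (p : ℤ × ℤ) (hp : p ≠ 0) (z : ℂ) :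
    L.fac (L.pp.latticeEquivProd.symm p) z =
      ((1 - z / L.per p) * Complex.exp (z / L.per p + z ^ 2 / (2 * (L.per p) ^ 2))) := by
  have h : (L.pp.latticeEquivProd.symm p : ℂ) ≠ 0 := by simpa using hp
  rw [fac, if_neg h, E2, per_eq]
  congr 2
  rw [div_pow]; ring

lemma sigma_hasProd (L : EllLattice) (z : ℂ) : HasProd (fun l ↦ L.fac l z) (L.sigma z) := by
  rw [← L.pp.latticeEquivProd.symm.toEquiv.hasProd_iff]
  refine HasProd.mul_isCompl (s := {0}) (t := {p | p ≠ 0}) isCompl_compl ?_ ?_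
  · convert hasProd_unique _ using 1
    · simp [fac]
    · infer_instance
  · have hs : Summable fun p : {p : ℤ × ℤ // p ≠ 0} ↦
        ‖L.fac (L.pp.latticeEquivProd.symm p.1) z - 1‖ :=
      (L.fac_summable z).comp_injective
        (i := fun p : {p : ℤ × ℤ // p ≠ 0} ↦ L.pp.latticeEquivProd.symm p.1)
        (L.pp.latticeEquivProd.symm.injective.comp Subtype.val_injective)
    have hm := multipliable_one_add_of_summable hs
    have := hm.hasProd
    simp only [add_sub_cancel] at this
    have he : (∏' p : {p : ℤ × ℤ // p ≠ 0}, L.fac (L.pp.latticeEquivProd.symm p.1) z) =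
        ∏' p : {p : ℤ × ℤ // p ≠ 0}, ((1 - z / L.per p.1) *
        Complex.exp (z / L.per p.1 + z ^ 2 / (2 * (L.per p.1) ^ 2))) :=
      tprod_congr fun p ↦ L.fac_symm p.1 p.2 z
    rw [he] at this
    exact this

lemma sigma_eq (L : EllLattice) : L.sigma = fun z ↦ ∏' l, L.fac l z :=
  funext fun z ↦ (L.sigma_hasProd z).tprod_eq.symm

lemma fac_tendsto (L : EllLattice) :
    TendstoLocallyUniformlyOn (fun (F : Finset L.pp.lattice) z ↦ ∏ l ∈ F, L.fac l z) L.sigma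
      atTop Set.univ := by
  rw [sigma_eq]
  exact (L.fac_unif.hasProdLocallyUniformlyOn)

lemma prod_differentiable (L : EllLattice) (F : Finset L.pp.lattice) :
    Differentiable ℂ (fun z ↦ ∏ l ∈ F, L.fac l z) :=
  Differentiable.fun_finsetProd fun l _ ↦ L.fac_differentiable l

lemma sigma_differentiable (L : EllLattice) : Differentiable ℂ L.sigma := by
  rw [← differentiableOn_univ]
  exact L.fac_tendsto.differentiableOn
    (.of_forall fun F ↦ (L.prod_differentiable F).differentiableOn) isOpen_univ

lemma fac_ne_zero (L : EllLattice) {z : ℂ} (hz : z ∉ L.pp.lattice) (l : L.pp.lattice) :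
    L.fac l z ≠ 0 := by
  unfold fac E2
  split_ifs with h
  · rintro rfl; exact hz (zero_mem _)
  · refine mul_ne_zero ?_ (Complex.exp_ne_zero _)
    rw [sub_ne_zero]
    intro h2
    rw [eq_div_iff h, one_mul] at h2
    exact hz (h2 ▸ l.2)

lemma sigma_ne_zero (L : EllLattice) {z : ℂ} (hz : z ∉ L.pp.lattice) : L.sigma z ≠ 0 := by
  have := tprod_one_add_ne_zero_of_summable (f := fun l ↦ L.fac l z - 1)
    (fun l ↦ by simpa using L.fac_ne_zero hz l) (L.fac_summable z)
  rw [sigma_eq]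
  simpa using this

lemma fac_neg (L : EllLattice) (l : L.pp.lattice) (z : ℂ) :
    L.fac (-l) (-z) = if (l : ℂ) = 0 then -z else L.fac l z := by
  by_cases h : (l : ℂ) = 0
  · simp [fac, h]
  · simp [fac, h]

lemma sigma_neg (L : EllLattice) (z : ℂ) : L.sigma (-z) = - L.sigma z := by
  simp only [sigma, neg_mul, neg_inj]
  congr 1
  let e : {p : ℤ × ℤ // p ≠ 0} ≃ {p : ℤ × ℤ // p ≠ 0} :=
    (Equiv.neg (ℤ × ℤ)).subtypeEquiv (by intro a; simp)
  rw [← e.tprod_eq]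
  refine tprod_congr fun p ↦ ?_
  have : L.per (e p).1 = - L.per p.1 := by
    simp [e, per]; ring
  rw [this]
  simp

lemma sigma_zero (L : EllLattice) : L.sigma 0 = 0 := by simp [sigma]

lemma deriv_tendsto (L : EllLattice) :
    TendstoLocallyUniformlyOn (fun (F : Finset L.pp.lattice) ↦ deriv fun z ↦ ∏ l ∈ F, L.fac l z)
      (deriv L.sigma) atTop Set.univ :=
  L.fac_tendsto.deriv (.of_forall fun F ↦ (L.prod_differentiable F).differentiableOn) isOpen_univ

lemma differentiable_deriv {f : ℂ → ℂ} (hf : Differentiable ℂ f) : Differentiable ℂ (deriv f) := by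
  rw [← differentiableOn_univ] at hf ⊢
  exact hf.deriv isOpen_univ

lemma deriv2_tendsto (L : EllLattice) :
    TendstoLocallyUniformlyOn
      (fun (F : Finset L.pp.lattice) ↦ deriv (deriv fun z ↦ ∏ l ∈ F, L.fac l z))
      (deriv (deriv L.sigma)) atTop Set.univ :=
  L.deriv_tendsto.deriv (.of_forall fun F ↦
    (differentiable_deriv (L.prod_differentiable F)).differentiableOn) isOpen_univ

lemma sigma_deriv_zero (L : EllLattice) : deriv L.sigma 0 = 1 := by
  refine tendsto_nhds_unique (L.deriv_tendsto.tendsto_at (Set.mem_univ 0)) ?_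
  refine tendsto_const_nhds.congr' ?_
  filter_upwards [eventually_ge_atTop {0}] with F hF
  have h0 : (0 : L.pp.lattice) ∈ F := by simpa using hF
  have h1 : (fun z ↦ ∏ l ∈ F, L.fac l z) = fun z ↦ z * ∏ l ∈ F.erase 0, L.fac l z := by
    ext z
    rw [← Finset.mul_prod_erase F _ h0]
    simp [fac]
  have h2 : HasDerivAt (fun z ↦ z * ∏ l ∈ F.erase 0, L.fac l z) _ 0 :=
    (hasDerivAt_id (0 : ℂ)).mul ((L.prod_differentiable (F.erase 0)) 0).hasDerivAt
  rw [h1, h2.deriv]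
  simp only [one_mul, id_eq, zero_mul, add_zero]
  symm
  refine Finset.prod_eq_one fun l hl ↦ ?_
  have : (l : ℂ) ≠ 0 := by simpa using (Finset.mem_erase.mp hl).1
  simp [fac, this, E2]

lemma logDeriv_fac (L : EllLattice) {z : ℂ} (hz : z ∉ L.pp.lattice) (l : L.pp.lattice) :
    logDeriv (L.fac l) z = 1 / (z - l) + 1 / l + z / l ^ 2 := by
  have h0 := L.fac_ne_zero hz l
  have hzl : z - l ≠ 0 := by
    rw [sub_ne_zero]; rintro rfl; exact hz l.2
  rw [logDeriv_apply]
  by_cases h : (l : ℂ) = 0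
  · have : L.fac l = fun z ↦ z := by ext; simp [fac, h]
    simp [this, h]
  · have h1 : L.fac l = fun z ↦ (1 - z / l) * Complex.exp (z / l + (z / l) ^ 2 / 2) := by
      ext; simp [fac, h, E2]
    have hA : HasDerivAt (fun z : ℂ ↦ 1 - z / l) (-(1 / l)) z :=
      ((hasDerivAt_id z).div_const (l : ℂ)).const_sub 1
    have hB : HasDerivAt (fun z : ℂ ↦ z / l + (z / l) ^ 2 / 2) (1 / l + (2 * (z / l) * (1 / l)) / 2)
        z := by
      have := ((hasDerivAt_id z).div_const (l : ℂ))
      refine this.add ?_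
      have h3 := (this.pow 2).div_const 2
      simpa using h3
    rw [h1] at h0 ⊢
    rw [(hA.fun_mul hB.cexp).deriv]
    have h3 : (1 - z / l) ≠ 0 := left_ne_zero_of_mul h0
    have h4 := right_ne_zero_of_mul h0
    have h5 : (l : ℂ) - z ≠ 0 := by rw [← neg_ne_zero]; simpa using hzl
    have h6 : 1 - z / l = (l - z) / l := by field_simp
    rw [h6]
    field_simp
    ring

lemma isOpen_compl (L : EllLattice) : IsOpen {z : ℂ | z ∉ L.pp.lattice} :=
  L.pp.isClosed_lattice.isOpen_compl

lemma deriv_logDeriv_prod (L : EllLattice) {z : ℂ} (hz : z ∉ L.pp.lattice)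
    (F : Finset L.pp.lattice) :
    deriv (logDeriv fun z ↦ ∏ l ∈ F, L.fac l z) z = - ∑ l ∈ F, (1 / (z - l) ^ 2 - 1 / l ^ 2) := by
  have h1 : logDeriv (fun z ↦ ∏ l ∈ F, L.fac l z) =ᶠ[𝓝 z]
      fun z ↦ ∑ l ∈ F, (1 / (z - l) + 1 / l + z / l ^ 2) := by
    filter_upwards [L.isOpen_compl.mem_nhds hz] with w hw
    rw [logDeriv_prod (fun l _ ↦ L.fac_ne_zero hw l) (fun l _ ↦ L.fac_differentiable l w)]
    exact Finset.sum_congr rfl fun l _ ↦ L.logDeriv_fac hw l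
  rw [h1.deriv_eq, ← Finset.sum_neg_distrib]
  refine HasDerivAt.deriv ?_
  refine HasDerivAt.fun_sum fun l _ ↦ ?_
  have hzl : z - l ≠ 0 := by
    rw [sub_ne_zero]; rintro rfl; exact hz l.2
  have := (((hasDerivAt_id z).sub_const (l : ℂ)).inv hzl).add_const (1 / (l : ℂ))
  have h2 := this.add ((hasDerivAt_id z).div_const ((l : ℂ) ^ 2))
  convert h2 using 1
  · ext; simp
  · simp only [id]; ring

lemma deriv_logDeriv {f : ℂ → ℂ} (hf : Differentiable ℂ f) {z : ℂ} (h : f z ≠ 0) :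
    HasDerivAt (logDeriv f) ((deriv (deriv f) z * f z - deriv f z * deriv f z) / f z ^ 2) z :=
  ((differentiable_deriv hf) z).hasDerivAt.div (hf z).hasDerivAt h

lemma zeta_hasDerivAt (L : EllLattice) {z : ℂ} (hz : z ∉ L.pp.lattice) :
    HasDerivAt L.zeta (- L.pp.weierstrassP z) z := by
  have h1 := deriv_logDeriv L.sigma_differentiable (L.sigma_ne_zero hz)
  have h2 : (deriv (deriv L.sigma) z * L.sigma z - deriv L.sigma z * deriv L.sigma z) /
      L.sigma z ^ 2 = - L.pp.weierstrassP z := by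
    have t0 := L.fac_tendsto.tendsto_at (Set.mem_univ z)
    have t1 := L.deriv_tendsto.tendsto_at (Set.mem_univ z)
    have t2 := L.deriv2_tendsto.tendsto_at (Set.mem_univ z)
    have t3 := ((t2.mul t0).sub (t1.mul t1)).div (t0.pow 2) (pow_ne_zero 2 (L.sigma_ne_zero hz))
    refine tendsto_nhds_unique t3 ?_
    refine (L.pp.hasSum_weierstrassP z).neg.congr fun F ↦ ?_
    rw [Finset.sum_neg_distrib, ← L.deriv_logDeriv_prod hz F]
    exact (deriv_logDeriv (L.prod_differentiable F)
      (Finset.prod_ne_zero_iff.mpr fun l _ ↦ L.fac_ne_zero hz l)).deriv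
  rw [h2] at h1
  exact h1

lemma compl_preconnected (L : EllLattice) : IsPreconnected {z : ℂ | z ∉ L.pp.lattice} := by
  have hc : (L.pp.lattice : Set ℂ).Countable := by
    have : Countable L.pp.lattice := L.pp.latticeEquivProd.toEquiv.countable_iff.mpr inferInstance
    exact Set.to_countable _
  exact (hc.isPathConnected_compl_of_one_lt_rank (by simp)).isConnected.isPreconnected

lemma compl_dense (L : EllLattice) : Dense {z : ℂ | z ∉ L.pp.lattice} := by
  have hc : (L.pp.lattice : Set ℂ).Countable := by
    have : Countable L.pp.lattice := L.pp.latticeEquivProd.toEquiv.countable_iff.mpr inferInstance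
    exact Set.to_countable _
  exact hc.dense_compl ℝ

lemma add_notMem (L : EllLattice) {z : ℂ} (l : L.pp.lattice) :
    z + l ∉ L.pp.lattice ↔ z ∉ L.pp.lattice :=
  (Submodule.add_mem_iff_left _ l.2).not

lemma sigma_hasDerivAt (L : EllLattice) {z : ℂ} (hz : z ∉ L.pp.lattice) :
    HasDerivAt L.sigma (L.zeta z * L.sigma z) z := by
  have := (L.sigma_differentiable z).hasDerivAt
  rw [zeta, div_mul_cancel₀ _ (L.sigma_ne_zero hz)]
  exact this

lemma sigma_quasi (L : EllLattice) (l : L.pp.lattice) :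
    ∃ η C : ℂ, C ≠ 0 ∧ ∀ z, L.sigma (z + l) = C * Complex.exp (η * z) * L.sigma z := by
  have hz1 : ∀ z ∈ {z : ℂ | z ∉ L.pp.lattice},
      HasDerivAt (fun z ↦ L.zeta (z + l) - L.zeta z) 0 z := by
    intro z hz
    have h1 := (L.zeta_hasDerivAt ((L.add_notMem l).mpr hz)).comp_add_const z (l : ℂ)
    have := h1.sub (L.zeta_hasDerivAt hz)
    rw [PeriodPair.weierstrassP_add_coe] at this
    exact this.congr_deriv (by ring)
  obtain ⟨η, hη⟩ := L.isOpen_compl.exists_is_const_of_deriv_eq_zero L.compl_preconnected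
    (fun z hz ↦ (hz1 z hz).differentiableAt.differentiableWithinAt) (fun z hz ↦ (hz1 z hz).deriv)
  have hz2 : ∀ z ∈ {z : ℂ | z ∉ L.pp.lattice},
      HasDerivAt (fun z ↦ L.sigma (z + l) * Complex.exp (-(η * z)) / L.sigma z) 0 z := by
    intro z hz
    have h1 := (L.sigma_hasDerivAt ((L.add_notMem l).mpr hz)).comp_add_const z (l : ℂ)
    have h2 : HasDerivAt (fun z : ℂ ↦ Complex.exp (-(η * z)))
        (Complex.exp (-(η * z)) * (-(η * 1))) z :=
      (((hasDerivAt_id z).const_mul η).neg).cexp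
    have h3 := (h1.mul h2).div (L.sigma_hasDerivAt hz) (L.sigma_ne_zero hz)
    refine h3.congr_deriv ?_
    rw [div_eq_zero_iff]
    left
    have := hη z hz
    simp only [Pi.mul_apply]
    linear_combination (L.sigma (z + l) * Complex.exp (-(η * z)) * L.sigma z) * this
  obtain ⟨C, hC⟩ := L.isOpen_compl.exists_is_const_of_deriv_eq_zero L.compl_preconnected
    (fun z hz ↦ (hz2 z hz).differentiableAt.differentiableWithinAt) (fun z hz ↦ (hz2 z hz).deriv)
  refine ⟨η, C, ?_, ?_⟩
  · obtain ⟨z, hz⟩ := L.compl_dense.nonempty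
    rw [← hC z hz]
    exact div_ne_zero (mul_ne_zero (L.sigma_ne_zero ((L.add_notMem l).mpr hz))
      (Complex.exp_ne_zero _)) (L.sigma_ne_zero hz)
  · have hcs := L.sigma_differentiable.continuous
    refine fun z ↦ congrFun (Continuous.ext_on L.compl_dense (f := fun z ↦ L.sigma (z + l))
      (g := fun z ↦ C * Complex.exp (η * z) * L.sigma z) (by fun_prop) (by fun_prop) ?_) z
    intro z hz
    have := hC z hz
    rw [div_eq_iff (L.sigma_ne_zero hz)] at this
    simp only
    rw [mul_right_comm, ← this, mul_assoc, ← Complex.exp_add]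
    simp

lemma sigma_mem (L : EllLattice) (l : L.pp.lattice) : L.sigma l = 0 := by
  obtain ⟨η, C, hC, h⟩ := L.sigma_quasi l
  have := h 0
  simpa [sigma_zero] using this

lemma sigma_deriv_mem (L : EllLattice) (l : L.pp.lattice) : deriv L.sigma l ≠ 0 := by
  obtain ⟨η, C, hC, h⟩ := L.sigma_quasi l
  have h1 : HasDerivAt L.sigma (deriv L.sigma l) (0 + l) := by
    rw [zero_add]; exact (L.sigma_differentiable l).hasDerivAt
  have h2 := h1.comp_add_const 0 (l : ℂ)
  have h0 : HasDerivAt L.sigma 1 0 := L.sigma_deriv_zero ▸ (L.sigma_differentiable 0).hasDerivAt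
  have h3 : HasDerivAt (fun z : ℂ ↦ C * Complex.exp (η * z))
        (C * (Complex.exp (η * 0) * (η * 1))) 0 :=
      (((hasDerivAt_id (0 : ℂ)).const_mul η).cexp).const_mul C
  have h4 := h3.mul h0
  have h5 := h2.unique (h4.congr_of_eventuallyEq (.of_forall h))
  rw [h5]
  simpa [sigma_zero] using hC

end EllLattice

namespace EllLattice

lemma entire_quotient {f d : ℂ → ℂ} (hf : Differentiable ℂ f) (hd : Differentiable ℂ d)
    (h : ∀ x, d x = 0 → f x = 0 ∧ deriv d x ≠ 0) :
    ∃ G : ℂ → ℂ, Differentiable ℂ G ∧ ∀ x, f x = d x * G x := by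
  classical
  refine ⟨fun x ↦ if d x = 0 then deriv f x / deriv d x else f x / d x, ?_, ?_⟩
  · intro x
    by_cases hx : d x = 0
    · obtain ⟨hfx, hdx⟩ := h x hx
      have hdf : DifferentiableAt ℂ (dslope f x) x :=
        ((Complex.differentiableOn_dslope univ_mem).mpr hf.differentiableOn).differentiableAt
          univ_mem
      have hdd : DifferentiableAt ℂ (dslope d x) x :=
        ((Complex.differentiableOn_dslope univ_mem).mpr hd.differentiableOn).differentiableAt
          univ_mem
      have h0 : dslope d x x ≠ 0 := by rwa [dslope_same]
      refine (hdf.div hdd h0).congr_of_eventuallyEq ?_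
      filter_upwards [hdd.continuousAt.eventually_ne h0] with z hz
      by_cases hzx : z = x
      · subst hzx
        simp [hx]
      · have hzx' : z - x ≠ 0 := sub_ne_zero.mpr hzx
        rw [dslope_of_ne _ hzx, slope_def_field, hx, sub_zero] at hz
        have hdz : d z ≠ 0 := fun h ↦ by simp [h] at hz
        simp only [if_neg hdz, Pi.div_apply]
        rw [dslope_of_ne _ hzx, dslope_of_ne _ hzx, slope_def_field, slope_def_field, hx, hfx,
          sub_zero, sub_zero]
        field_simp
    · refine ((hf x).div (hd x) hx).congr_of_eventuallyEq ?_
      filter_upwards [(hd x).continuousAt.eventually_ne hx] with z hz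
      simp [hz]
  · intro x
    by_cases hx : d x = 0
    · simp [hx, (h x hx).1]
    · simp only [if_neg hx]
      field_simp

lemma sigma_eq_zero_iff (L : EllLattice) (z : ℂ) : L.sigma z = 0 ↔ z ∈ L.pp.lattice := by
  constructor
  · intro h
    by_contra h2
    exact L.sigma_ne_zero h2 h
  · intro h
    exact L.sigma_mem ⟨z, h⟩

lemma three_term (L : EllLattice) (x y z w : ℂ) (h2y : y + y ∉ L.pp.lattice)
    (hzy : z + y ∉ L.pp.lattice) (hzy' : z - y ∉ L.pp.lattice) :
    L.sigma (x + y) * L.sigma (x - y) * (L.sigma (z + w) * L.sigma (z - w)) +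
    L.sigma (x + z) * L.sigma (x - z) * (L.sigma (w + y) * L.sigma (w - y)) +
    L.sigma (x + w) * L.sigma (x - w) * (L.sigma (y + z) * L.sigma (y - z)) = 0 := by
  set d : ℂ → ℂ := fun x ↦ L.sigma (x + y) * L.sigma (x - y) with hd
  set f : ℂ → ℂ := fun x ↦
    L.sigma (x + y) * L.sigma (x - y) * (L.sigma (z + w) * L.sigma (z - w)) +
    L.sigma (x + z) * L.sigma (x - z) * (L.sigma (w + y) * L.sigma (w - y)) +
    L.sigma (x + w) * L.sigma (x - w) * (L.sigma (y + z) * L.sigma (y - z)) with hf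
  have hs := L.sigma_differentiable
  have hsd : ∀ a : ℂ, Differentiable ℂ fun x ↦ L.sigma (x + a) := fun a ↦
    hs.comp (differentiable_id.add_const a)
  have hsd' : ∀ a : ℂ, Differentiable ℂ fun x ↦ L.sigma (x - a) := fun a ↦
    hs.comp (differentiable_id.sub_const a)
  have hdd : Differentiable ℂ d := (hsd y).mul (hsd' y)
  have hdf : Differentiable ℂ f :=
    ((((hsd y).mul (hsd' y)).mul_const _).add (((hsd z).mul (hsd' z)).mul_const _)).add
      (((hsd w).mul (hsd' w)).mul_const _)
  -- quasi-periodicity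
  have hq : ∀ l : L.pp.lattice, ∀ x, ∃ E : ℂ, E ≠ 0 ∧ f (x + l) = E * f x ∧ d (x + l) = E * d x := by
    intro l x
    obtain ⟨η, C, hC, h⟩ := L.sigma_quasi l
    have key : ∀ a, L.sigma (x + l + a) * L.sigma (x + l - a) =
        (C ^ 2 * Complex.exp (2 * η * x)) * (L.sigma (x + a) * L.sigma (x - a)) := by
      intro a
      rw [show x + l + a = (x + a) + l by ring, show x + l - a = (x - a) + l by ring, h, h,
        show 2 * η * x = η * (x + a) + η * (x - a) by ring, Complex.exp_add]
      ring
    refine ⟨C ^ 2 * Complex.exp (2 * η * x), mul_ne_zero (pow_ne_zero _ hC) (Complex.exp_ne_zero _),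
      ?_, key y⟩
    simp only [hf]
    rw [key y, key z, key w]
    ring
  have hodd := L.sigma_neg
  have e1 : L.sigma (y - w) = - L.sigma (w - y) := by rw [← hodd]; congr 1; ring
  have e2 : L.sigma (y - z) = - L.sigma (z - y) := by rw [← hodd]; congr 1; ring
  have hfy : f y = 0 := by
    simp only [hf]
    rw [sub_self, sigma_zero, e1, add_comm w y]; ring
  have hfy' : f (-y) = 0 := by
    simp only [hf]
    rw [neg_add_cancel, sigma_zero, show -y + z = -(y - z) by ring, show -y - z = - (y + z) by ring,
      show -y + w = -(y - w) by ring, show -y - w = - (y + w) by ring]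
    simp only [hodd]
    rw [e1, add_comm w y]; ring
  have hfz : f z = 0 := by
    simp only [hf]
    rw [sub_self, sigma_zero, e2, add_comm y z]; ring
  -- simple zeros
  have hdm : ∀ a (ha : a ∈ L.pp.lattice), HasDerivAt L.sigma (deriv L.sigma a) a :=
    fun a _ ↦ (hs a).hasDerivAt
  have hzero : ∀ x, d x = 0 → f x = 0 ∧ deriv d x ≠ 0 := by
    intro x hx
    have hD : deriv d x = deriv L.sigma (x + y) * L.sigma (x - y) +
        L.sigma (x + y) * deriv L.sigma (x - y) :=
      (((hs (x + y)).hasDerivAt.comp_add_const x y).mul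
        ((hs (x - y)).hasDerivAt.comp_sub_const x y)).deriv
    rcases mul_eq_zero.mp hx with h | h
    · have hm := (L.sigma_eq_zero_iff _).mp h
      constructor
      · obtain ⟨E, -, h1, -⟩ := hq ⟨x + y, hm⟩ (-y)
        simpa [hfy'] using h1
      · rw [hD, h, zero_mul, add_zero]
        refine mul_ne_zero (L.sigma_deriv_mem ⟨_, hm⟩) (L.sigma_ne_zero fun h3 ↦ h2y ?_)
        have := sub_mem hm h3
        convert this using 1; ring
    · have hm := (L.sigma_eq_zero_iff _).mp h
      constructor
      · obtain ⟨E, -, h1, -⟩ := hq ⟨x - y, hm⟩ y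
        simpa [hfy] using h1
      · rw [hD, h, mul_zero, zero_add]
        refine mul_ne_zero (L.sigma_ne_zero fun h3 ↦ h2y ?_) (L.sigma_deriv_mem ⟨_, hm⟩)
        have := sub_mem h3 hm
        convert this using 1; ring
  obtain ⟨G, hG, hGf⟩ := entire_quotient hdf hdd hzero
  have hdense : Dense {x | d x ≠ 0} := by
    have hc : (L.pp.lattice : Set ℂ).Countable := by
      have : Countable L.pp.lattice :=
        L.pp.latticeEquivProd.toEquiv.countable_iff.mpr inferInstance
      exact Set.to_countable _
    have hc2 : ((fun t ↦ t - y) '' (L.pp.lattice : Set ℂ) ∪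
        (fun t ↦ t + y) '' (L.pp.lattice : Set ℂ)).Countable := (hc.image _).union (hc.image _)
    refine (hc2.dense_compl ℝ).mono ?_
    intro x hx hdx
    apply hx
    rcases mul_eq_zero.mp hdx with h | h
    · exact Or.inl ⟨x + y, (L.sigma_eq_zero_iff _).mp h, by ring⟩
    · exact Or.inr ⟨x - y, (L.sigma_eq_zero_iff _).mp h, by ring⟩
  have hGper : ∀ (l : L.pp.lattice) (x : ℂ), G (x + l) = G x := by
    intro l
    have hGc := hG.continuous
    refine fun x ↦ congrFun (Continuous.ext_on hdense (f := fun x ↦ G (x + l))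
      (g := G) (by fun_prop) hGc ?_) x
    intro x hx
    obtain ⟨E, hE, h1, h2⟩ := hq l x
    rw [hGf, hGf x, h2] at h1
    have : E * d x ≠ 0 := mul_ne_zero hE hx
    refine mul_left_cancel₀ this ?_
    simp only
    rw [h1]; ring
  have hGz : G z = 0 := by
    have := hGf z
    rw [hfz] at this
    exact (mul_eq_zero.mp this.symm).resolve_left
      (mul_ne_zero (L.sigma_ne_zero hzy) (L.sigma_ne_zero hzy'))
  have hGx : G x = 0 := by
    rw [← hGz]
    exact hG.apply_eq_apply_of_bounded (IsZLattice.isCompact_range_of_periodic L.pp.lattice _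
      hG.continuous fun a b hb ↦ hGper ⟨b, hb⟩ a).isBounded x z
  have := hGf x
  rw [hGx, mul_zero] at this
  exact this

lemma zeta_neg (L : EllLattice) (z : ℂ) : L.zeta (-z) = - L.zeta z := by
  have h : deriv L.sigma (-z) = deriv L.sigma z := by
    have h1 := deriv_comp_neg L.sigma z
    have h2 : (fun x ↦ L.sigma (-x)) = fun x ↦ - L.sigma x := funext L.sigma_neg
    rw [h2, deriv.fun_neg] at h1
    linear_combination h1
  rw [zeta, zeta, h, sigma_neg, div_neg]

lemma chi_formula (L : EllLattice) (a b c : ℂ) (ha : a ∉ L.pp.lattice) (hb : b ∉ L.pp.lattice)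
    (hc : c ∉ L.pp.lattice) (habc : c + a + b ∉ L.pp.lattice) (hab : a + b ∉ L.pp.lattice) :
    L.chi a b c = L.sigma (a + b) * L.sigma (c + a) * L.sigma (c + b) /
      (L.sigma a * L.sigma b * L.sigma c * L.sigma (c + a + b)) := by
  set y := (a + b) / 2 with hy
  set z := (a - b) / 2 with hz
  set w := c + (a + b) / 2 with hw
  have k1 : y + y = a + b := by rw [hy]; ring
  have k2 : y + z = a := by rw [hy, hz]; ring
  have k3 : y - z = b := by rw [hy, hz]; ring
  have k4 : y + w = c + a + b := by rw [hy, hw]; ring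
  have k5 : y - w = -c := by rw [hy, hw]; ring
  have k6 : z + w = c + a := by rw [hz, hw]; ring
  have k7 : z - w = -(c + b) := by rw [hz, hw]; ring
  have k8 : w + y = c + a + b := by rw [hy, hw]; ring
  have k9 : w - y = c := by rw [hy, hw]; ring
  have hc' : -c ∉ L.pp.lattice := by rwa [neg_mem_iff]
  have hs := L.sigma_differentiable
  have hT := fun x ↦ L.three_term x y z w (by rwa [k1]) (by rwa [add_comm, k2])
    (by rw [← neg_mem_iff, neg_sub, k3]; exact hb)
  have d1 : ∀ t, HasDerivAt (fun x ↦ L.sigma (x + t) * L.sigma (x - t))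
      (deriv L.sigma (y + t) * L.sigma (y - t) + L.sigma (y + t) * deriv L.sigma (y - t)) y :=
    fun t ↦ ((hs (y + t)).hasDerivAt.comp_add_const y t).mul
        ((hs (y - t)).hasDerivAt.comp_sub_const y t)
  have d2 := (((d1 y).mul_const (L.sigma (z + w) * L.sigma (z - w))).add
    ((d1 z).mul_const (L.sigma (w + y) * L.sigma (w - y)))).add
    ((d1 w).mul_const (L.sigma (y + z) * L.sigma (y - z)))
  have d3 : HasDerivAt (fun _ : ℂ ↦ (0 : ℂ)) _ y :=
    d2.congr_of_eventuallyEq (.of_forall fun x ↦ (hT x).symm)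
  have d4 := d3.unique (hasDerivAt_const y (0 : ℂ))
  have hσ' : ∀ t, t ∉ L.pp.lattice → deriv L.sigma t = L.zeta t * L.sigma t :=
    fun t ht ↦ (L.sigma_hasDerivAt ht).deriv
  rw [k1, sub_self, k2, k3, k4, k5, k6, k7, k8, k9, L.sigma_deriv_zero, L.sigma_zero,
    hσ' a ha, hσ' b hb, hσ' _ habc, hσ' _ hc', L.zeta_neg, L.sigma_neg, L.sigma_neg] at d4
  have n1 := L.sigma_ne_zero ha
  have n2 := L.sigma_ne_zero hb
  have n3 := L.sigma_ne_zero hc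
  have n4 := L.sigma_ne_zero habc
  rw [eq_div_iff (by simp [n1, n2, n3, n4]), chi]
  linear_combination d4

/-- rank-one relation -/
lemma phi_rank_one (L : EllLattice) (ξ δ κ κ' : ℂ) (h1 : δ ∉ L.pp.lattice) (h2 : κ ∉ L.pp.lattice)
    (h3 : κ' ∉ L.pp.lattice) (h4 : κ + κ' ∉ L.pp.lattice) (h5 : ξ ∉ L.pp.lattice)
    (h6 : ξ + δ ∉ L.pp.lattice) (h7 : δ + κ' ∉ L.pp.lattice) (h8 : δ + κ' - κ ∉ L.pp.lattice) :
    L.Phi δ (-κ) * L.Phi (ξ + δ) (κ + κ') =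
      L.Phi δ κ' * L.Phi ξ (κ + κ') - L.Phi ξ κ * L.Phi (ξ + δ) κ' := by
  have hT := L.three_term (ξ + (δ + κ + κ') / 2) ((δ + κ' - κ) / 2) ((δ + κ + κ') / 2)
    ((δ - κ - κ') / 2) (by ring_nf at h8 ⊢; exact h8) (by ring_nf at h7 ⊢; exact h7)
    (by ring_nf; exact h2)
  have k1 : ξ + (δ + κ + κ') / 2 + (δ + κ' - κ) / 2 = ξ + δ + κ' := by ring
  have k2 : ξ + (δ + κ + κ') / 2 - (δ + κ' - κ) / 2 = ξ + κ := by ring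
  have k3 : (δ + κ + κ') / 2 + (δ - κ - κ') / 2 = δ := by ring
  have k4 : (δ + κ + κ') / 2 - (δ - κ - κ') / 2 = κ + κ' := by ring
  have k5 : ξ + (δ + κ + κ') / 2 + (δ + κ + κ') / 2 = ξ + δ + (κ + κ') := by ring
  have k6 : ξ + (δ + κ + κ') / 2 - (δ + κ + κ') / 2 = ξ := by ring
  have k7 : (δ - κ - κ') / 2 + (δ + κ' - κ) / 2 = δ + -κ := by ring
  have k8 : (δ - κ - κ') / 2 - (δ + κ' - κ) / 2 = -κ' := by ring
  have k9 : ξ + (δ + κ + κ') / 2 + (δ - κ - κ') / 2 = ξ + δ := by ring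
  have k10 : ξ + (δ + κ + κ') / 2 - (δ - κ - κ') / 2 = ξ + (κ + κ') := by ring
  have k11 : (δ + κ' - κ) / 2 + (δ + κ + κ') / 2 = δ + κ' := by ring
  have k12 : (δ + κ' - κ) / 2 - (δ + κ + κ') / 2 = -κ := by ring
  rw [k1, k2, k3, k4, k5, k6, k7, k8, k9, k10, k11, k12, L.sigma_neg, L.sigma_neg] at hT
  have n1 := L.sigma_ne_zero h1
  have n2 := L.sigma_ne_zero h2
  have n3 := L.sigma_ne_zero h3
  have n4 := L.sigma_ne_zero h4
  have n5 := L.sigma_ne_zero h5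
  have n6 := L.sigma_ne_zero h6
  simp only [Phi, L.sigma_neg]
  field_simp
  linear_combination hT

/-- diagonal relation -/
lemma phi_chi (L : EllLattice) (ξ δ κ α : ℂ) (h1 : δ ∉ L.pp.lattice) (h2 : κ ∉ L.pp.lattice)
    (h3 : α ∉ L.pp.lattice) (h5 : ξ ∉ L.pp.lattice)
    (h6 : ξ + δ ∉ L.pp.lattice) (h7 : κ - δ ∉ L.pp.lattice) (h8 : α + κ ∉ L.pp.lattice)
    (h9 : ξ + α ∉ L.pp.lattice) (h10 : ξ + δ + α ∉ L.pp.lattice) (h11 : ξ + κ ∉ L.pp.lattice)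
    (h12 : ξ + δ + κ ∉ L.pp.lattice)
    (h13 : ξ + α + κ ∉ L.pp.lattice) (h14 : ξ + δ + α + κ ∉ L.pp.lattice) :
    L.Phi ξ κ + (L.chi α κ (ξ + δ))⁻¹ * (L.Phi δ (-κ) * L.Phi (ξ + δ) κ) =
      L.chi α δ ξ * ((L.chi α κ ξ)⁻¹ * L.Phi ξ κ) := by
  have hd : L.chi α δ ξ = L.chi α κ ξ - L.chi κ (-δ) (ξ + δ + α) := by
    simp only [chi, L.zeta_neg]
    rw [show ξ + δ + α + κ + -δ = ξ + α + κ by ring, show ξ + δ + α = ξ + α + δ by ring]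
    ring
  rw [hd, L.chi_formula κ (-δ) (ξ + δ + α) h2 (by rwa [neg_mem_iff]) h10
    (by rwa [show ξ + δ + α + κ + -δ = ξ + α + κ by ring]) (by rwa [← sub_eq_add_neg]),
    L.chi_formula α κ ξ h3 h2 h5 h13 h8, L.chi_formula α κ (ξ + δ) h3 h2 h6 h14 h8]
  have e1 : L.sigma (δ + -κ) = - L.sigma (κ - δ) := by rw [← L.sigma_neg]; congr 1; ring
  rw [show ξ + δ + α + κ + -δ = ξ + α + κ by ring, show ξ + δ + α + -δ = ξ + α by ring,
    ← sub_eq_add_neg]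
  simp only [Phi, e1, L.sigma_neg]
  have n1 := L.sigma_ne_zero h1
  have n2 := L.sigma_ne_zero h2
  have n3 := L.sigma_ne_zero h3
  have n5 := L.sigma_ne_zero h5
  have n6 := L.sigma_ne_zero h6
  have n7 := L.sigma_ne_zero h7
  have n8 := L.sigma_ne_zero h8
  have n9 := L.sigma_ne_zero h9
  have n10 := L.sigma_ne_zero h10
  have n11 := L.sigma_ne_zero h11
  have n12 := L.sigma_ne_zero h12
  have n13 := L.sigma_ne_zero h13
  have n14 := L.sigma_ne_zero h14
  field_simp
  ring

end EllLattice

namespace KPData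

lemma mat_rel {N N' : ℕ} (M M2 : Matrix (Fin N) (Fin N') ℂ) (C : Matrix (Fin N') (Fin N) ℂ)
    (r x x2 : Fin N → ℂ) (s2 y y2 : Fin N' → ℂ) (p q : ℂ)
    (hU : IsUnit (1 + M * C).det) (hU2 : IsUnit (1 + M2 * C).det)
    (hM : M2 = M - vecMulVec r s2) (hr : r + x2 = p • x) (hs : s2 = y + q • y2) :
    (1 - y ⬝ᵥ (C *ᵥ ((1 + M * C)⁻¹ *ᵥ r))) * (1 - s2 ⬝ᵥ ((1 + C * M2)⁻¹ *ᵥ (C *ᵥ x2))) =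
      1 - q * (y2 ⬝ᵥ (C *ᵥ ((1 + M2 * C)⁻¹ *ᵥ x2))) -
        p * (y ⬝ᵥ (C *ᵥ ((1 + M * C)⁻¹ *ᵥ x))) := by
  have hU2' : IsUnit (1 + C * M2).det := by rwa [Matrix.det_one_add_mul_comm]
  have hc : (1 + C * M2)⁻¹ * C = C * (1 + M2 * C)⁻¹ := by
    have e : C * (1 + M2 * C) = (1 + C * M2) * C := by
      rw [Matrix.mul_add, Matrix.add_mul, Matrix.mul_one, Matrix.one_mul, Matrix.mul_assoc]
    calc (1 + C * M2)⁻¹ * C = (1 + C * M2)⁻¹ * (C * (1 + M2 * C)) * (1 + M2 * C)⁻¹ := by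
          rw [Matrix.mul_assoc, Matrix.mul_assoc C, Matrix.mul_nonsing_inv _ hU2, Matrix.mul_one]
      _ = _ := by
          rw [e, ← Matrix.mul_assoc, Matrix.nonsing_inv_mul _ hU2', Matrix.one_mul]
  set U := (1 + M * C)⁻¹ with hUd
  set U2 := (1 + M2 * C)⁻¹ with hU2d
  have hUU : U * (vecMulVec r s2 * C) * U2 = U2 - U := by
    have e : vecMulVec r s2 * C = (1 + M * C) - (1 + M2 * C) := by
      rw [hM, Matrix.sub_mul]; abel
    rw [e, mul_sub, sub_mul, Matrix.nonsing_inv_mul _ hU, Matrix.one_mul, Matrix.mul_assoc,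
      Matrix.mul_nonsing_inv _ hU2, Matrix.mul_one]
  have hv : (1 + C * M2)⁻¹ *ᵥ (C *ᵥ x2) = C *ᵥ (U2 *ᵥ x2) := by
    rw [Matrix.mulVec_mulVec, hc, ← Matrix.mulVec_mulVec]
  rw [hv]
  have hprod : (y ⬝ᵥ (C *ᵥ (U *ᵥ r))) * (s2 ⬝ᵥ (C *ᵥ (U2 *ᵥ x2))) =
      y ⬝ᵥ (C *ᵥ (U2 *ᵥ x2)) - y ⬝ᵥ (C *ᵥ (U *ᵥ x2)) := by
    have e1 : U *ᵥ (vecMulVec r s2 *ᵥ (C *ᵥ (U2 *ᵥ x2))) = U2 *ᵥ x2 - U *ᵥ x2 := by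
      rw [← Matrix.sub_mulVec, ← hUU]
      simp only [Matrix.mulVec_mulVec, Matrix.mul_assoc]
    have e2 : vecMulVec r s2 *ᵥ (C *ᵥ (U2 *ᵥ x2)) = (s2 ⬝ᵥ (C *ᵥ (U2 *ᵥ x2))) • r := by
      ext i
      simp [vecMulVec, Matrix.mulVec, dotProduct, Finset.mul_sum, Finset.sum_mul]
      refine Finset.sum_congr rfl fun _ _ => Finset.sum_congr rfl fun _ _ => ?_
      ring
    rw [e2, Matrix.mulVec_smul] at e1
    rw [← dotProduct_sub, ← Matrix.mulVec_sub, ← e1, Matrix.mulVec_smul, dotProduct_smul,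
      smul_eq_mul, mul_comm]
  have h1 : y ⬝ᵥ (C *ᵥ (U *ᵥ r)) + y ⬝ᵥ (C *ᵥ (U *ᵥ x2)) = p * (y ⬝ᵥ (C *ᵥ (U *ᵥ x))) := by
    rw [← dotProduct_add, ← Matrix.mulVec_add, ← Matrix.mulVec_add, hr, Matrix.mulVec_smul,
      Matrix.mulVec_smul, dotProduct_smul, smul_eq_mul]
  have h2 : s2 ⬝ᵥ (C *ᵥ (U2 *ᵥ x2)) = y ⬝ᵥ (C *ᵥ (U2 *ᵥ x2)) + q * (y2 ⬝ᵥ (C *ᵥ (U2 *ᵥ x2))) := by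
    conv_lhs => rw [hs]
    rw [add_dotProduct, smul_dotProduct, smul_eq_mul]
  linear_combination hprod - h1 - h2

lemma diag_inv {n : ℕ} (f : Fin n → ℂ) (hf : ∀ i, f i ≠ 0) :
    (Matrix.diagonal f)⁻¹ = Matrix.diagonal fun i => (f i)⁻¹ := by
  apply Matrix.inv_eq_left_inv
  rw [Matrix.diagonal_mul_diagonal, ← Matrix.diagonal_one]
  congr 1
  ext i
  simp [hf i]

/-- One step in a lattice direction `d`. -/
lemma step {N N' : ℕ} (D : KPData N N') (α β d : ℂ) (n m h n2 m2 h2 : ℤ)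
    (hG : ∀ (c0 cd : ℤ) (a : Fin N → ℤ) (b : Fin N' → ℤ) (ca cb : ℤ),
      ¬ (c0 = 0 ∧ cd = 0 ∧ a = 0 ∧ b = 0 ∧ ca = 0 ∧ cb = 0) →
      c0 * D.xi n m h + cd * d + (∑ i, a i * D.κ i) + (∑ j, b j * D.κ' j) + ca * α + cb * β
        ∉ D.L.pp.lattice)
    (hI : IsUnit ((1 + D.M n m h * D.C).det)) (hI2 : IsUnit ((1 + D.M n2 m2 h2 * D.C).det))
    (hχα : ∀ (n m h : ℤ) (i : Fin N), D.L.chi α (D.κ i) (D.xi n m h) ≠ 0)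
    (hχβ : ∀ (n m h : ℤ) (j : Fin N'), D.L.chi β (D.κ' j) (D.xi n m h) ≠ 0)
    (hxi : D.xi n2 m2 h2 = D.xi n m h + d)
    (hρ : ∀ i, ∃ A, D.ρ i n m h = A * Complex.exp (D.L.zeta (D.xi n m h) * D.κ i) ∧
      D.ρ i n2 m2 h2 = A * D.L.Phi d (-(D.κ i)) * Complex.exp (D.L.zeta (D.xi n2 m2 h2) * D.κ i))
    (hν : ∀ j, ∃ B, D.ν j n m h = B * D.L.Phi d (D.κ' j) *
        Complex.exp (D.L.zeta (D.xi n m h) * D.κ' j) ∧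
      D.ν j n2 m2 h2 = B * Complex.exp (D.L.zeta (D.xi n2 m2 h2) * D.κ' j)) :
    D.W β n m h * D.V α n2 m2 h2 =
        1 - D.L.chi β (-d) (D.xi n2 m2 h2) * D.S β α n2 m2 h2 -
          D.L.chi α d (D.xi n m h) * D.S β α n m h := by
  choose A hA hA2 using hρ
  choose B hB hB2 using hν
  set x := D.xi n m h with hx
  have g0 : ∀ (c0 cd ca cb : ℤ), ¬ (c0 = 0 ∧ cd = 0 ∧ ca = 0 ∧ cb = 0) →
      c0 * x + cd * d + ca * α + cb * β ∉ D.L.pp.lattice := by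
    intro c0 cd ca cb hn
    have := hG c0 cd 0 0 ca cb (by tauto)
    simpa using this
  have gi : ∀ (i : Fin N) (c0 cd k ca cb : ℤ), ¬ (c0 = 0 ∧ cd = 0 ∧ k = 0 ∧ ca = 0 ∧ cb = 0) →
      c0 * x + cd * d + k * D.κ i + ca * α + cb * β ∉ D.L.pp.lattice := by
    intro i c0 cd k ca cb hn
    have := hG c0 cd (Pi.single i k) 0 ca cb (by rw [Pi.single_eq_zero_iff]; tauto)
    simpa [Pi.single_apply, ite_mul] using this
  have gj : ∀ (j : Fin N') (c0 cd k ca cb : ℤ), ¬ (c0 = 0 ∧ cd = 0 ∧ k = 0 ∧ ca = 0 ∧ cb = 0) →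
      c0 * x + cd * d + k * D.κ' j + ca * α + cb * β ∉ D.L.pp.lattice := by
    intro i c0 cd k ca cb hn
    have := hG c0 cd 0 (Pi.single i k) ca cb (by rw [Pi.single_eq_zero_iff]; tauto)
    simpa [Pi.single_apply, ite_mul] using this
  have gij : ∀ (i : Fin N) (j : Fin N') (c0 cd k l ca cb : ℤ),
      ¬ (c0 = 0 ∧ cd = 0 ∧ k = 0 ∧ l = 0 ∧ ca = 0 ∧ cb = 0) →
      c0 * x + cd * d + k * D.κ i + l * D.κ' j + ca * α + cb * β ∉ D.L.pp.lattice := by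
    intro i j c0 cd k l ca cb hn
    have := hG c0 cd (Pi.single i k) (Pi.single j l) ca cb
      (by rw [Pi.single_eq_zero_iff, Pi.single_eq_zero_iff]; tauto)
    simpa [Pi.single_apply, ite_mul] using this
  have ex : ∀ a b : ℂ, Complex.exp (a * b) * Complex.exp (-a * b) = 1 := by
    intro a b
    rw [← Complex.exp_add, neg_mul, add_neg_cancel, Complex.exp_zero]
  have r1 : ∀ i, D.r n m h i = A i * D.L.Phi x (D.κ i) := by
    intro i
    simp only [r, hA, EllLattice.Psi, ← hx]
    linear_combination (A i * D.L.Phi x (D.κ i)) * ex (D.L.zeta x) (D.κ i)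
  have r2 : ∀ i, D.r n2 m2 h2 i = A i * D.L.Phi d (-(D.κ i)) * D.L.Phi (x + d) (D.κ i) := by
    intro i
    simp only [r, hA2, EllLattice.Psi, hxi]
    linear_combination (A i * D.L.Phi d (-(D.κ i)) * D.L.Phi (x + d) (D.κ i)) *
      ex (D.L.zeta (x + d)) (D.κ i)
  have s1 : ∀ j, D.s n m h j = B j * D.L.Phi d (D.κ' j) * D.L.Phi x (D.κ' j) := by
    intro j
    simp only [s, hB, EllLattice.Psi, ← hx]
    linear_combination (B j * D.L.Phi d (D.κ' j) * D.L.Phi x (D.κ' j)) * ex (D.L.zeta x) (D.κ' j)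
  have s2 : ∀ j, D.s n2 m2 h2 j = B j * D.L.Phi (x + d) (D.κ' j) := by
    intro j
    simp only [s, hB2, EllLattice.Psi, hxi]
    linear_combination (B j * D.L.Phi (x + d) (D.κ' j)) * ex (D.L.zeta (x + d)) (D.κ' j)
  have ex2 : ∀ a b c : ℂ, Complex.exp (a * b) * Complex.exp (a * c) *
      Complex.exp (-a * (b + c)) = 1 := by
    intro a b c
    rw [← Complex.exp_add, ← mul_add, ex]
  have M1 : ∀ i j, D.M n m h i j =
      A i * D.L.Phi x (D.κ i + D.κ' j) * (B j * D.L.Phi d (D.κ' j)) := by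
    intro i j
    simp only [M, Matrix.of_apply, hA, hB, EllLattice.Psi, ← hx]
    linear_combination (A i * D.L.Phi x (D.κ i + D.κ' j) * (B j * D.L.Phi d (D.κ' j))) *
      ex2 (D.L.zeta x) (D.κ i) (D.κ' j)
  have M2 : ∀ i j, D.M n2 m2 h2 i j =
      A i * D.L.Phi d (-(D.κ i)) * D.L.Phi (x + d) (D.κ i + D.κ' j) * B j := by
    intro i j
    simp only [M, Matrix.of_apply, hA2, hB2, EllLattice.Psi, hxi]
    linear_combination (A i * D.L.Phi d (-(D.κ i)) * D.L.Phi (x + d) (D.κ i + D.κ' j) * B j) *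
      ex2 (D.L.zeta (x + d)) (D.κ i) (D.κ' j)
  have hM : D.M n2 m2 h2 = D.M n m h - vecMulVec (D.r n m h) (D.s n2 m2 h2) := by
    ext i j
    rw [Matrix.sub_apply, vecMulVec_apply, M1, M2, r1, s2]
    have := D.L.phi_rank_one x d (D.κ i) (D.κ' j)
      (by simpa using g0 0 1 0 0 (by simp))
      (by simpa using gi i 0 0 1 0 0 (by simp))
      (by simpa using gj j 0 0 1 0 0 (by simp))
      (by simpa using gij i j 0 0 1 1 0 0 (by simp))
      (by simpa using g0 1 0 0 0 (by simp))
      (by simpa using g0 1 1 0 0 (by simp))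
      (by simpa using gj j 0 1 1 0 0 (by simp))
      (by
        have := gij i j 0 1 (-1) 1 0 0 (by simp)
        convert this using 2
        push_cast; ring)
    linear_combination (A i * B j) * this
  have hr : D.r n m h + (D.DK α n2 m2 h2)⁻¹ *ᵥ D.r n2 m2 h2 =
      D.L.chi α d x • ((D.DK α n m h)⁻¹ *ᵥ D.r n m h) := by
    ext i
    rw [DK, DK, diag_inv _ (hχα _ _ _), diag_inv _ (hχα _ _ _)]
    simp only [Pi.add_apply, Pi.smul_apply, Matrix.mulVec_diagonal, r1, r2, smul_eq_mul, hxi,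
      ← hx]
    have := D.L.phi_chi x d (D.κ i) α
      (by simpa using g0 0 1 0 0 (by simp))
      (by simpa using gi i 0 0 1 0 0 (by simp))
      (by simpa using g0 0 0 1 0 (by simp))
      (by simpa using g0 1 0 0 0 (by simp))
      (by simpa using g0 1 1 0 0 (by simp))
      (by convert gi i 0 (-1) 1 0 0 (by simp) using 2; push_cast; ring)
      (by convert gi i 0 0 1 1 0 (by simp) using 2; push_cast; ring)
      (by convert gi i 1 0 0 1 0 (by simp) using 2; push_cast; ring)
      (by convert gi i 1 1 0 1 0 (by simp) using 2; push_cast; ring)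
      (by convert gi i 1 0 1 0 0 (by simp) using 2; push_cast; ring)
      (by convert gi i 1 1 1 0 0 (by simp) using 2; push_cast; ring)
      (by convert gi i 1 0 1 1 0 (by simp) using 2; push_cast; ring)
      (by convert gi i 1 1 1 1 0 (by simp) using 2; push_cast; ring)
    linear_combination A i * this
  have hs : D.s n2 m2 h2 = (D.s n m h ᵥ* (D.DK' β n m h)⁻¹) +
      D.L.chi β (-d) (x + d) • (D.s n2 m2 h2 ᵥ* (D.DK' β n2 m2 h2)⁻¹) := by
    ext j
    rw [DK', DK', diag_inv _ (hχβ _ _ _), diag_inv _ (hχβ _ _ _)]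
    simp only [Pi.add_apply, Pi.smul_apply, Matrix.vecMul_diagonal, s1, s2, smul_eq_mul, hxi,
      ← hx]
    have := D.L.phi_chi (x + d) (-d) (D.κ' j) β
      (by simpa using g0 0 1 0 0 (by simp))
      (by simpa using gj j 0 0 1 0 0 (by simp))
      (by simpa using g0 0 0 0 1 (by simp))
      (by simpa using g0 1 1 0 0 (by simp))
      (by simpa using g0 1 0 0 0 (by simp))
      (by convert gj j 0 1 1 0 0 (by simp) using 2; push_cast; ring)
      (by convert gj j 0 0 1 0 1 (by simp) using 2; push_cast; ring)
      (by convert gj j 1 1 0 0 1 (by simp) using 2; push_cast; ring)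
      (by convert gj j 1 0 0 0 1 (by simp) using 2; push_cast; ring)
      (by convert gj j 1 1 1 0 0 (by simp) using 2; push_cast; ring)
      (by convert gj j 1 0 1 0 0 (by simp) using 2; push_cast; ring)
      (by convert gj j 1 1 1 0 1 (by simp) using 2; push_cast; ring)
      (by convert gj j 1 0 1 0 1 (by simp) using 2; push_cast; ring)
    have hneg : D.L.Phi (-d) (-(D.κ' j)) = - D.L.Phi d (D.κ' j) := by
      simp only [EllLattice.Phi]
      rw [← neg_add, D.L.sigma_neg, D.L.sigma_neg, D.L.sigma_neg, neg_mul_neg, neg_div]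
    rw [hneg, add_neg_cancel_right] at this
    linear_combination B j * this
  have key := mat_rel (D.M n m h) (D.M n2 m2 h2) D.C (D.r n m h) _ _ _ _ _ _ _ hI hI2 hM hr hs
  rw [W, V, S, S, hxi]
  simp only [Matrix.dotProduct_mulVec (D.s n m h) ((D.DK' β n m h)⁻¹),
    Matrix.dotProduct_mulVec (D.s n2 m2 h2) ((D.DK' β n2 m2 h2)⁻¹)]
  exact key

lemma exp_psi_neg (L : EllLattice) (d k : ℂ) :
    Complex.exp (-(L.zeta d) * k) * L.Psi d (-k) = L.Phi d (-k) := by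
  have : Complex.exp (-(L.zeta d) * k) * Complex.exp (-(L.zeta d) * -k) = 1 := by
    rw [← Complex.exp_add, ← Complex.exp_zero]; congr 1; ring
  rw [EllLattice.Psi]
  linear_combination L.Phi d (-k) * this

lemma exp_psi (L : EllLattice) (d k : ℂ) :
    Complex.exp (L.zeta d * k) * L.Psi d k = L.Phi d k := by
  have : Complex.exp (L.zeta d * k) * Complex.exp (-(L.zeta d) * k) = 1 := by
    rw [← Complex.exp_add, ← Complex.exp_zero]; congr 1; ring
  rw [EllLattice.Psi]
  linear_combination L.Phi d k * this

lemma gen_single {N N' : ℕ} (D : KPData N N') (α β : ℂ) (hgen : D.Generic ![α, β])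
    (cn cm ch : ℤ) (a : Fin N → ℤ) (b : Fin N' → ℤ)
    (hn : ¬ (cn = 0 ∧ cm = 0 ∧ ch = 0 ∧ a = 0 ∧ b = 0)) :
    cn * D.del + cm * D.eps + ch * D.lam + (∑ i, a i * D.κ i) + (∑ j, b j * D.κ' j)
      ∉ D.L.pp.lattice := by
  have := hgen 0 cn cm ch a b 0 (by tauto)
  rw [EllLattice.mem_iff] at this
  simpa using this

lemma phi_ne (L : EllLattice) {d k : ℂ} (h1 : d ∉ L.pp.lattice) (h2 : k ∉ L.pp.lattice)
    (h3 : d + k ∉ L.pp.lattice) : L.Phi d k ≠ 0 :=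
  div_ne_zero (L.sigma_ne_zero h3) (mul_ne_zero (L.sigma_ne_zero h1) (L.sigma_ne_zero h2))

lemma gen_phi {N N' : ℕ} (D : KPData N N') (α β : ℂ) (hgen : D.Generic ![α, β]) (cn cm ch : ℤ)
    (hc : ¬ (cn = 0 ∧ cm = 0 ∧ ch = 0)) (d : ℂ)
    (hd : d = cn * D.del + cm * D.eps + ch * D.lam) :
    (∀ i, D.L.Phi d (-(D.κ i)) ≠ 0) ∧ (∀ j, D.L.Phi d (D.κ' j) ≠ 0) := by
  subst hd
  refine ⟨fun i => phi_ne _ ?_ ?_ ?_, fun j => phi_ne _ ?_ ?_ ?_⟩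
  · simpa using gen_single D α β hgen cn cm ch 0 0 (by tauto)
  · simpa [Pi.single_apply, ite_mul] using
      gen_single D α β hgen 0 0 0 (Pi.single i (-1)) 0 (by simp)
  · simpa [Pi.single_apply, ite_mul] using
      gen_single D α β hgen cn cm ch (Pi.single i (-1)) 0 (by simp)
  · simpa using gen_single D α β hgen cn cm ch 0 0 (by tauto)
  · simpa [Pi.single_apply, ite_mul] using
      gen_single D α β hgen 0 0 0 0 (Pi.single j 1) (by simp)
  · simpa [Pi.single_apply, ite_mul] using
      gen_single D α β hgen cn cm ch 0 (Pi.single j 1) (by simp)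

/-- Genericity in terms of the current value of `ξ` and one direction `d`. -/
lemma gen_dir {N N' : ℕ} (D : KPData N N') (α β : ℂ) (hgen : D.Generic ![α, β]) (n m h : ℤ)
    (en em eh : ℤ) (he : ¬ (en = 0 ∧ em = 0 ∧ eh = 0)) (d : ℂ)
    (hd : d = en * D.del + em * D.eps + eh * D.lam)
    (c0 cd : ℤ) (a : Fin N → ℤ) (b : Fin N' → ℤ) (ca cb : ℤ)
    (hn : ¬ (c0 = 0 ∧ cd = 0 ∧ a = 0 ∧ b = 0 ∧ ca = 0 ∧ cb = 0)) :
    c0 * D.xi n m h + cd * d + (∑ i, a i * D.κ i) + (∑ j, b j * D.κ' j) + ca * α + cb * β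
        ∉ D.L.pp.lattice := by
  have := hgen c0 (c0 * n + cd * en) (c0 * m + cd * em) (c0 * h + cd * eh) a b ![ca, cb] (by
    rintro ⟨h0, h1, h2, h3, h4, h5, h6⟩
    subst h0
    have k1 : ca = 0 := by simpa using congrFun h6 0
    have k2 : cb = 0 := by simpa using congrFun h6 1
    have k3 : cd = 0 := by
      by_contra hcd
      apply he
      simp [hcd] at h1 h2 h3
      exact ⟨h1, h2, h3⟩
    exact hn ⟨rfl, k3, h4, h5, k1, k2⟩)
  rw [EllLattice.mem_iff] at this
  convert this using 2
  rw [hd, xi]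
  simp [Fin.sum_univ_two]
  ring

end KPData
end

/-- `W_β Ṽ_α = 1 − χ_{β,−δ}(ξ+δ) S̃_{β,α} − χ_{α,δ}(ξ) S_{β,α}`, together with the
analogous relations in the other two lattice directions. -/
theorem WV_S_relation {N N' : ℕ} (D : KPData N N') (α β : ℂ)
    (hρ0 : ∀ i, D.ρ0 i ≠ 0) (hν0 : ∀ j, D.ν0 j ≠ 0)
    (hgen : D.Generic ![α, β])
    (hInv : ∀ n m h : ℤ, IsUnit ((1 + D.M n m h * D.C).det))
    (hχα : ∀ (n m h : ℤ) (i : Fin N), D.L.chi α (D.κ i) (D.xi n m h) ≠ 0)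
    (hχβ : ∀ (n m h : ℤ) (j : Fin N'), D.L.chi β (D.κ' j) (D.xi n m h) ≠ 0) :
    ∀ n m h : ℤ,
      (D.W β n m h * D.V α (n + 1) m h =
        1 - D.L.chi β (-D.del) (D.xi (n + 1) m h) * D.S β α (n + 1) m h -
          D.L.chi α D.del (D.xi n m h) * D.S β α n m h) ∧
      (D.W β n m h * D.V α n (m + 1) h =
        1 - D.L.chi β (-D.eps) (D.xi n (m + 1) h) * D.S β α n (m + 1) h -
          D.L.chi α D.eps (D.xi n m h) * D.S β α n m h) ∧
      (D.W β n m h * D.V α n m (h + 1) =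
        1 - D.L.chi β (-D.lam) (D.xi n m (h + 1)) * D.S β α n m (h + 1) -
          D.L.chi α D.lam (D.xi n m h) * D.S β α n m h) := by
  intro n m h
  obtain ⟨pd, pd'⟩ := KPData.gen_phi D α β hgen 1 0 0 (by simp) D.del (by simp)
  obtain ⟨pe, pe'⟩ := KPData.gen_phi D α β hgen 0 1 0 (by simp) D.eps (by simp)
  obtain ⟨pl, pl'⟩ := KPData.gen_phi D α β hgen 0 0 1 (by simp) D.lam (by simp)
  refine ⟨?_, ?_, ?_⟩
  · refine KPData.step D α β D.del n m h (n + 1) m h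
      (KPData.gen_dir D α β hgen n m h 1 0 0 (by simp) D.del (by simp))
      (hInv _ _ _) (hInv _ _ _) hχα hχβ (by simp [KPData.xi]; ring) (fun i => ?_) (fun j => ?_)
    · refine ⟨(D.L.Phi D.del (-(D.κ i))) ^ n * (D.L.Phi D.eps (-(D.κ i))) ^ m *
        (D.L.Phi D.lam (-(D.κ i))) ^ h * D.ρ0 i, ?_, ?_⟩
      · simp only [KPData.ρ, KPData.exp_psi_neg]; ring
      · simp only [KPData.ρ, KPData.exp_psi_neg]; rw [zpow_add_one₀ (pd i)]; ring
    · refine ⟨(D.L.Phi D.del (D.κ' j)) ^ (-(n + 1)) * (D.L.Phi D.eps (D.κ' j)) ^ (-m) *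
        (D.L.Phi D.lam (D.κ' j)) ^ (-h) * D.ν0 j, ?_, ?_⟩
      · simp only [KPData.ν, KPData.exp_psi]
        rw [show -n = -(n + 1) + 1 by ring, zpow_add_one₀ (pd' j)]; ring
      · simp only [KPData.ν, KPData.exp_psi]; ring
  · refine KPData.step D α β D.eps n m h n (m + 1) h
      (KPData.gen_dir D α β hgen n m h 0 1 0 (by simp) D.eps (by simp))
      (hInv _ _ _) (hInv _ _ _) hχα hχβ (by simp [KPData.xi]; ring) (fun i => ?_) (fun j => ?_)
    · refine ⟨(D.L.Phi D.del (-(D.κ i))) ^ n * (D.L.Phi D.eps (-(D.κ i))) ^ m *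
        (D.L.Phi D.lam (-(D.κ i))) ^ h * D.ρ0 i, ?_, ?_⟩
      · simp only [KPData.ρ, KPData.exp_psi_neg]; ring
      · simp only [KPData.ρ, KPData.exp_psi_neg]; rw [zpow_add_one₀ (pe i)]; ring
    · refine ⟨(D.L.Phi D.del (D.κ' j)) ^ (-n) * (D.L.Phi D.eps (D.κ' j)) ^ (-(m + 1)) *
        (D.L.Phi D.lam (D.κ' j)) ^ (-h) * D.ν0 j, ?_, ?_⟩
      · simp only [KPData.ν, KPData.exp_psi]
        rw [show -m = -(m + 1) + 1 by ring, zpow_add_one₀ (pe' j)]; ring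
      · simp only [KPData.ν, KPData.exp_psi]; ring
  · refine KPData.step D α β D.lam n m h n m (h + 1)
      (KPData.gen_dir D α β hgen n m h 0 0 1 (by simp) D.lam (by simp))
      (hInv _ _ _) (hInv _ _ _) hχα hχβ (by simp [KPData.xi]; ring) (fun i => ?_) (fun j => ?_)
    · refine ⟨(D.L.Phi D.del (-(D.κ i))) ^ n * (D.L.Phi D.eps (-(D.κ i))) ^ m *
        (D.L.Phi D.lam (-(D.κ i))) ^ h * D.ρ0 i, ?_, ?_⟩
      · simp only [KPData.ρ, KPData.exp_psi_neg]; ring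
      · simp only [KPData.ρ, KPData.exp_psi_neg]; rw [zpow_add_one₀ (pl i)]; ring
    · refine ⟨(D.L.Phi D.del (D.κ' j)) ^ (-n) * (D.L.Phi D.eps (D.κ' j)) ^ (-m) *
        (D.L.Phi D.lam (D.κ' j)) ^ (-(h + 1)) * D.ν0 j, ?_, ?_⟩
      · simp only [KPData.ν, KPData.exp_psi]
        rw [show -h = -(h + 1) + 1 by ring, zpow_add_one₀ (pl' j)]; ring
      · simp only [KPData.ν, KPData.exp_psi]; ring
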